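/- arXiv:0907.0684 — 7 statements merged into one kernel-verified Lean document; each statement's English description precedes it below -/
import Mathlib

section
/- There are exactly two pairs (X₁, X₂) of positive real numbers satisfying the Einstein system with parameters γ₁ = 1/2, γ₂ = 1/6, b₁ = 1/8, b₂ = 1/6, r = 1/2. (This is the algebraic content of the theorem: the bisymmetric fibration of Type II corresponding to the triple (𝔤₂, 𝔰𝔲₂ ⊕ 𝔰𝔲₂, ℝ ⊕ ℝ) admits, up to homothety, exactly two Einstein adapted metrics, none of which is binormal or restricts to an Einstein metric on the fiber.) -/
/-- The Einstein system (E1)–(E2) for a Type II bisymmetric fibration,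
in unknowns `X₁ X₂` with parameters `γ₁ γ₂ b₁ b₂ r`. -/
def EinsteinSystem (γ₁ γ₂ b₁ b₂ r X₁ X₂ : ℝ) : Prop :=
  2*γ₁*X₁^2*X₂ + (1-γ₁)*X₂ - 2*γ₂*X₁*X₂^2 - (1-γ₂)*X₁ = 0 ∧
  2*b₁*X₂ + 2*b₂*X₁ - 4*r*X₁*X₂ + 2*γ₁*X₁^2*X₂ + (1-γ₁)*X₂ = 0

/-- The quartic whose roots in `(1/2, 3/2)` are the first coordinates of the positive solutions. -/
def einsteinQuartic (x : ℝ) : ℝ :=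
  1008 * x ^ 4 - 3456 * x ^ 3 + 4352 * x ^ 2 - 2448 * x + 513

theorem continuous_einsteinQuartic : Continuous einsteinQuartic := by
  unfold einsteinQuartic
  fun_prop

theorem hasDerivAt_einsteinQuartic (x : ℝ) :
    HasDerivAt einsteinQuartic (4032 * x ^ 3 - 10368 * x ^ 2 + 8704 * x - 2448) x := by
  have h := (((((hasDerivAt_pow 4 x).const_mul 1008).sub ((hasDerivAt_pow 3 x).const_mul 3456)).add
    ((hasDerivAt_pow 2 x).const_mul 4352)).sub ((hasDerivAt_id x).const_mul 2448)).add_const 513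
  refine h.congr_deriv ?_
  norm_num
  ring

theorem einsteinQuartic_neg {x : ℝ} (h₁ : 3 / 5 ≤ x) (h₂ : x ≤ 6 / 5) :
    einsteinQuartic x < 0 := by
  unfold einsteinQuartic
  nlinarith [mul_nonneg (sub_nonneg.2 h₁) (sub_nonneg.2 h₂),
    mul_nonneg (mul_nonneg (sub_nonneg.2 h₁) (sub_nonneg.2 h₂)) (sq_nonneg (x - 4 / 5)),
    mul_nonneg (mul_nonneg (sub_nonneg.2 h₁) (sub_nonneg.2 h₂)) (sq_nonneg (x - 1)),
    sq_nonneg (x - 4 / 5), sq_nonneg (x - 1), sq_nonneg ((x - 4 / 5) * (x - 1))]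

theorem einsteinQuartic_strictAntiOn : StrictAntiOn einsteinQuartic (Set.Icc (1 / 2) (3 / 5)) := by
  refine strictAntiOn_of_deriv_neg (convex_Icc _ _) continuous_einsteinQuartic.continuousOn ?_
  intro x hx
  rw [interior_Icc] at hx
  obtain ⟨h₁, h₂⟩ := hx
  rw [(hasDerivAt_einsteinQuartic x).deriv]
  nlinarith [mul_pos (sub_pos.2 h₁) (sub_pos.2 h₂),
    mul_pos (mul_pos (sub_pos.2 h₁) (sub_pos.2 h₂)) (sub_pos.2 h₁),
    mul_pos (mul_pos (sub_pos.2 h₁) (sub_pos.2 h₂)) (sub_pos.2 h₂)]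

theorem einsteinQuartic_strictMonoOn : StrictMonoOn einsteinQuartic (Set.Icc (6 / 5) (3 / 2)) := by
  refine strictMonoOn_of_deriv_pos (convex_Icc _ _) continuous_einsteinQuartic.continuousOn ?_
  intro x hx
  rw [interior_Icc] at hx
  obtain ⟨h₁, h₂⟩ := hx
  rw [(hasDerivAt_einsteinQuartic x).deriv]
  nlinarith [pow_pos (sub_pos.2 h₁) 2, pow_pos (sub_pos.2 h₁) 3]

theorem exists_roots_einsteinQuartic :
    ∃ a b : ℝ, a < b ∧ ∀ x, (1 / 2 < x ∧ x < 3 / 2 ∧ einsteinQuartic x = 0) ↔ x = a ∨ x = b := by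
  obtain ⟨a, ⟨ha₁, ha₂⟩, ha⟩ := intermediate_value_Ioo' (by norm_num : (1 / 2 : ℝ) ≤ 3 / 5)
    continuous_einsteinQuartic.continuousOn
    (show (0 : ℝ) ∈ Set.Ioo _ _ by constructor <;> norm_num [einsteinQuartic])
  obtain ⟨b, ⟨hb₁, hb₂⟩, hb⟩ := intermediate_value_Ioo (by norm_num : (6 / 5 : ℝ) ≤ 3 / 2)
    continuous_einsteinQuartic.continuousOn
    (show (0 : ℝ) ∈ Set.Ioo _ _ by constructor <;> norm_num [einsteinQuartic])
  refine ⟨a, b, by linarith, fun x => ⟨?_, ?_⟩⟩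
  · rintro ⟨h₁, h₂, hx⟩
    rcases le_total x (3 / 5) with h | h
    · exact Or.inl (einsteinQuartic_strictAntiOn.injOn ⟨h₁.le, h⟩ ⟨ha₁.le, ha₂.le⟩
        (hx.trans ha.symm))
    rcases le_total x (6 / 5) with h' | h'
    · exact absurd hx (einsteinQuartic_neg h h').ne
    · exact Or.inr (einsteinQuartic_strictMonoOn.injOn ⟨h', h₂.le⟩ ⟨hb₁.le, hb₂.le⟩
        (hx.trans hb.symm))
  · rintro (rfl | rfl)
    · exact ⟨ha₁, by linarith, ha⟩
    · exact ⟨by linarith, hb₂, hb⟩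

/-- Multiplied by the squared denominator of `y`, the left side of the first equation becomes the
quartic. -/
theorem first_equation_eq_einsteinQuartic {x y : ℝ}
    (hxy : y * (3 * ((x - 1 / 2) * (3 / 2 - x))) = x) :
    864 * ((x - 1 / 2) * (3 / 2 - x)) ^ 2 *
      (2*(1/2)*x^2*y + (1-1/2)*y - 2*(1/6)*x*y^2 - (1-1/6)*x) = -x * einsteinQuartic x := by
  unfold einsteinQuartic
  linear_combination 864 * ((x - 1 / 2) * (3 / 2 - x) * (x ^ 2 + 1 / 2) / 3 -
    x / 27 * (y * (3 * ((x - 1 / 2) * (3 / 2 - x))) + x)) * hxy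

/-- The second equation determines `y` from `x`; substituting into the first leaves the quartic. -/
theorem pos_einsteinSystem_iff (x y : ℝ) :
    (0 < x ∧ 0 < y ∧ EinsteinSystem (1/2) (1/6) (1/8) (1/6) (1/2) x y) ↔
      (1 / 2 < x ∧ x < 3 / 2 ∧ einsteinQuartic x = 0) ∧
        y = x / (3 * ((x - 1 / 2) * (3 / 2 - x))) := by
  unfold EinsteinSystem
  constructor
  · rintro ⟨hx, hy, h₁, h₂⟩
    have hxy : y * (3 * ((x - 1 / 2) * (3 / 2 - x))) = x := by linear_combination -3 * h₂
    have hq : 0 < (x - 1 / 2) * (3 / 2 - x) := by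
      have := pos_of_mul_pos_right (hxy ▸ hx) hy.le
      linarith
    have hx₁ : 1 / 2 < x := by nlinarith
    have hx₂ : x < 3 / 2 := by nlinarith
    have hyq : y = x / (3 * ((x - 1 / 2) * (3 / 2 - x))) := by
      rw [eq_div_iff (by positivity), hxy]
    refine ⟨⟨hx₁, hx₂, ?_⟩, hyq⟩
    have key := first_equation_eq_einsteinQuartic hxy
    rw [h₁, mul_zero] at key
    exact (mul_eq_zero.1 key.symm).resolve_left (neg_ne_zero.2 hx.ne')
  · rintro ⟨⟨hx₁, hx₂, hf⟩, hyq⟩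
    have hx : 0 < x := by linarith
    have hp : 0 < x - 1 / 2 := by linarith
    have hm : 0 < 3 / 2 - x := by linarith
    have hy : 0 < y := by rw [hyq]; positivity
    have hxy : y * (3 * ((x - 1 / 2) * (3 / 2 - x))) = x := by
      rw [hyq]; exact div_mul_cancel₀ _ (by positivity)
    refine ⟨hx, hy, ?_, by linear_combination -1 / 3 * hxy⟩
    have key := first_equation_eq_einsteinQuartic hxy
    rw [hf, mul_zero] at key
    exact (mul_eq_zero.1 key).resolve_left (by positivity)

/- STATEMENT 3: exactly two positive solutions for (𝔤₂, 𝔰𝔲₂⊕𝔰𝔲₂, ℝ⊕ℝ). -/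
theorem g2_exactly_two_einstein_adapted_metrics :
    {P : ℝ × ℝ | 0 < P.1 ∧ 0 < P.2 ∧
      EinsteinSystem (1/2) (1/6) (1/8) (1/6) (1/2) P.1 P.2}.ncard = 2 := by
  obtain ⟨a, b, hab, hroots⟩ := exists_roots_einsteinQuartic
  rw [Set.ncard_eq_two]
  refine ⟨(a, a / (3 * ((a - 1 / 2) * (3 / 2 - a)))), (b, b / (3 * ((b - 1 / 2) * (3 / 2 - b)))),
    fun h => hab.ne (congrArg Prod.fst h), ?_⟩
  ext ⟨x, y⟩
  simp only [Set.mem_ofPred_eq, pos_einsteinSystem_iff, hroots, Set.mem_insert_iff,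
    Set.mem_singleton_iff, Prod.mk.injEq]
  constructor
  · rintro ⟨rfl | rfl, h⟩
    · exact Or.inl ⟨rfl, h⟩
    · exact Or.inr ⟨rfl, h⟩
  · rintro (⟨rfl, h⟩ | ⟨rfl, h⟩)
    · exact ⟨Or.inl rfl, h⟩
    · exact ⟨Or.inr rfl, h⟩
end

section
/- There are exactly four pairs (X₁, X₂) of positive real numbers satisfying the Einstein system with parameters γ₁ = 5/9, γ₂ = 1/9, b₁ = 1/36, b₂ = 5/36, r = 1/2. (This is the algebraic content of the theorem: the bisymmetric fibration of Type II corresponding to the triple (𝔢₇, 𝔰𝔬₁₂ ⊕ 𝔰𝔲₂, 𝔰𝔬₂ ⊕ 𝔰𝔬₁₀ ⊕ ℝ) admits, up to homothety, exactly four Einstein adapted metrics.) -/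
open Polynomial in
/-- A real quartic has at most four zeros, so four ordered ones exhaust them. -/
theorem ncard_zeros_quartic_eq_four {k₄ k₃ k₂ k₁ k₀ : ℝ} (hk : k₄ ≠ 0) {a b c d : ℝ}
    (hab : a < b) (hbc : b < c) (hcd : c < d)
    (h : ∀ x ∈ ({a, b, c, d} : Set ℝ), k₄*x^4 + k₃*x^3 + k₂*x^2 + k₁*x + k₀ = 0) :
    {x : ℝ | k₄*x^4 + k₃*x^3 + k₂*x^2 + k₁*x + k₀ = 0}.ncard = 4 := by
  let p : ℝ[X] := C k₄ * X^4 + C k₃ * X^3 + C k₂ * X^2 + C k₁ * X + C k₀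
  have hdeg : p.natDegree = 4 := by
    simp only [p]
    compute_degree!
  have hp : p ≠ 0 := by
    intro h0
    simp [h0] at hdeg
  have hroots : {x : ℝ | k₄*x^4 + k₃*x^3 + k₂*x^2 + k₁*x + k₀ = 0} = p.roots.toFinset := by
    ext x
    simp [hp, p]
  rw [hroots, Set.ncard_coe_finset]
  apply le_antisymm
  · exact (Multiset.toFinset_card_le _).trans (hdeg ▸ p.card_roots')
  · have hcard : ({a, b, c, d} : Finset ℝ).card = 4 := by
      have hac := hab.trans hbc
      have hbd := hbc.trans hcd
      simp [hab.ne, hbc.ne, hcd.ne, hac.ne, hbd.ne, (hac.trans hcd).ne]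
    rw [← hcard]
    apply Finset.card_le_card
    rw [← Finset.coe_subset, ← hroots]
    simpa [Set.subset_def] using h

/-- Eliminating `X₂` from the Einstein system leaves this quartic in `X₁`. -/
theorem ncard_zeros_eliminant :
    {x : ℝ | 350*x^4 + (-1110)*x^3 + 1179*x^2 + (-492)*x + 69 = 0}.ncard = 4 := by
  let f : ℝ → ℝ := fun x => 350*x^4 + (-1110)*x^3 + 1179*x^2 + (-492)*x + 69
  have hf : Continuous f := by fun_prop
  obtain ⟨a, ha, hfa⟩ := intermediate_value_Ioo' (by norm_num : (3/10 : ℝ) ≤ 2/5)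
    hf.continuousOn (show (0 : ℝ) ∈ Set.Ioo (f (2/5)) (f (3/10)) by norm_num [f])
  obtain ⟨b, hb, hfb⟩ := intermediate_value_Ioo (by norm_num : (2/5 : ℝ) ≤ 1/2)
    hf.continuousOn (show (0 : ℝ) ∈ Set.Ioo (f (2/5)) (f (1/2)) by norm_num [f])
  obtain ⟨c, hc, hfc⟩ := intermediate_value_Ioo' (by norm_num : (1/2 : ℝ) ≤ 1)
    hf.continuousOn (show (0 : ℝ) ∈ Set.Ioo (f 1) (f (1/2)) by norm_num [f])
  obtain ⟨d, hd, hfd⟩ := intermediate_value_Ioo (by norm_num : (1 : ℝ) ≤ 3/2)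
    hf.continuousOn (show (0 : ℝ) ∈ Set.Ioo (f 1) (f (3/2)) by norm_num [f])
  refine ncard_zeros_quartic_eq_four (by norm_num) (ha.2.trans hb.1) (hb.2.trans hc.1)
    (hc.2.trans hd.1) ?_
  rintro x (rfl | rfl | rfl | rfl) <;> assumption

/-- The positive solutions are the points over the zeros of the eliminant. -/
theorem positive_einstein_iff {x y : ℝ} :
    (0 < x ∧ 0 < y ∧ EinsteinSystem (5/9) (1/9) (1/36) (5/36) (1/2) x y) ↔
      350*x^4 + (-1110)*x^3 + 1179*x^2 + (-492)*x + 69 = 0 ∧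
        y = -5*x / (20*x^2 - 36*x + 9) := by
  have helim : 6 * (350*x^4 + (-1110)*x^3 + 1179*x^2 + (-492)*x + 69) =
      4*(20*x^2 - 36*x + 9)^2 + 5*(5*x^2 + 2)*(20*x^2 - 36*x + 9) + 25*x^2 := by ring
  constructor
  · rintro ⟨hx, hy, h₁, h₂⟩
    have hyD : y * (20*x^2 - 36*x + 9) = -5*x := by linear_combination 18 * h₂
    have hD : 20*x^2 - 36*x + 9 ≠ 0 := by
      intro h0
      rw [h0] at hyD
      linarith
    refine ⟨?_, by rw [eq_div_iff hD, hyD]⟩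
    have hx' : x ≠ 0 := hx.ne'
    generalize 20*x^2 - 36*x + 9 = D at *
    have : x * (6 * (350*x^4 + (-1110)*x^3 + 1179*x^2 + (-492)*x + 69)) = 0 := by
      rw [helim]
      linear_combination (-9/2*D^2) * h₁ + (5*x^2*D + 2*D - x*(y*D - 5*x)) * hyD
    simpa [hx'] using this
  · rintro ⟨hf, hy⟩
    rw [hf] at helim
    have hD : 20*x^2 - 36*x + 9 < 0 := by
      by_contra! h0
      have hx2 : x^2 = 0 := by nlinarith [mul_nonneg (sq_nonneg x) h0, sq_nonneg x]
      have hx0 : x = 0 := by simpa using hx2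
      norm_num [hx0] at hf
    have hx : 0 < x := by nlinarith [sq_nonneg x]
    have hyD : y * (20*x^2 - 36*x + 9) = -5*x := by rw [hy, div_mul_cancel₀ _ hD.ne]
    refine ⟨hx, hy ▸ div_pos_of_neg_of_neg (by linarith) hD, ?_, by linear_combination hyD / 18⟩
    have hD' := hD.ne
    clear hy
    generalize 20*x^2 - 36*x + 9 = D at *
    apply mul_left_cancel₀ (pow_ne_zero 2 hD')
    linear_combination (2/9) * (x * helim + (5*x^2*D + 2*D - x*(y*D - 5*x)) * hyD)

/- STATEMENT 5: exactly four positive solutions for (𝔢₇, 𝔰𝔬₁₂⊕𝔰𝔲₂, 𝔰𝔬₂⊕𝔰𝔬₁₀⊕ℝ). -/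
theorem e7_p2_exactly_four_einstein_adapted_metrics :
    {P : ℝ × ℝ | 0 < P.1 ∧ 0 < P.2 ∧
      EinsteinSystem (5/9) (1/9) (1/36) (5/36) (1/2) P.1 P.2}.ncard = 4 := by
  have himage : {P : ℝ × ℝ | 0 < P.1 ∧ 0 < P.2 ∧
      EinsteinSystem (5/9) (1/9) (1/36) (5/36) (1/2) P.1 P.2} =
      Set.image (fun x => (x, -5*x / (20*x^2 - 36*x + 9)))
        {x : ℝ | 350*x^4 + (-1110)*x^3 + 1179*x^2 + (-492)*x + 69 = 0} := by
    ext ⟨x, y⟩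
    simp only [Set.mem_ofPred_eq, positive_einstein_iff, Set.mem_image, Prod.mk.injEq]
    constructor
    · rintro ⟨hx, rfl⟩
      exact ⟨x, hx, rfl, rfl⟩
    · rintro ⟨_, hx, rfl, rfl⟩
      exact ⟨hx, rfl⟩
  rw [himage, Set.ncard_image_of_injective _ fun _ _ h => congrArg Prod.fst h]
  exact ncard_zeros_eliminant
end

section
/- There is no pair (X₁, X₂) of positive real numbers satisfying the Einstein system with parameters γ₁ = 3/5, γ₂ = 1/15, b₁ = 1/4, b₂ = 1/60, r = 1/2. (This is the algebraic content of the theorem: the bisymmetric fibration of Type II corresponding to the triple (𝔢₈, 𝔢₇ ⊕ 𝔰𝔲₂, 𝔰𝔲₈ ⊕ ℝ) admits no Einstein adapted metric.) -/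
/- STATEMENT 8: no positive solutions for (𝔢₈, 𝔢₇⊕𝔰𝔲₂, 𝔰𝔲₈⊕ℝ). -/
theorem e8_no_einstein_adapted_metric :
    ¬ ∃ X₁ X₂ : ℝ, 0 < X₁ ∧ 0 < X₂ ∧
      EinsteinSystem (3/5) (1/15) (1/4) (1/60) (1/2) X₁ X₂ := by
  rintro ⟨x, y, hx, hy, -, h⟩
  -- The second equation reads `y * ((6 * x - 5) ^ 2 + 2) + x = 0` after scaling by `30`.
  have hpos : 0 < y * ((6 * x - 5) ^ 2 + 2) := by positivity
  linarith
end

section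
/- Let 0 < γ₁ < 1, set γ₂ = 1 − γ₁, let b₁, b₂ ≥ 0 and r > 0, and set D = 4r² − 4b₁γ₁ − 4b₂(1−γ₁) − 2γ₁(1−γ₁). Then there exists a pair (X₁, X₂) of positive reals satisfying the Einstein system together with the constraint (1−γ₁)X₂ = γ₁X₁ if and only if D ≥ 0; moreover, in that case, the pairs of positive reals satisfying the system and this constraint are exactly those with X₁ = (2r + √D)/(2γ₁) or X₁ = (2r − √D)/(2γ₁), and X₂ = γ₁X₁/(1−γ₁) (both values of X₁ are positive). (This is the algebraic content of the corollary describing Einstein adapted metrics whose restriction to the fiber is also Einstein, in the case γ₂ = 1 − γ₁.) -/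
/-- Under the fiber-Einstein constraint, the Einstein system with `γ₂ = 1 - γ₁` reduces to a
single quadratic equation in `X₁`. -/
theorem einsteinSystem_iff_sq_eq {γ b₁ b₂ r X₁ X₂ : ℝ} (hγ1 : γ < 1) (hX₁ : 0 < X₁)
    (hc : (1 - γ) * X₂ = γ * X₁) :
    EinsteinSystem γ (1 - γ) b₁ b₂ r X₁ X₂ ↔
      (2 * γ * X₁ - 2 * r) ^ 2 = 4*r^2 - 4*b₁*γ - 4*b₂*(1-γ) - 2*γ*(1-γ) := by
  have hγ : 1 - γ ≠ 0 := (sub_pos.2 hγ1).ne'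
  have key : 2 * (1 - γ) *
      (2*b₁*X₂ + 2*b₂*X₁ - 4*r*X₁*X₂ + 2*γ*X₁^2*X₂ + (1-γ)*X₂) =
      X₁ * ((2 * γ * X₁ - 2 * r) ^ 2 - (4*r^2 - 4*b₁*γ - 4*b₂*(1-γ) - 2*γ*(1-γ))) := by
    linear_combination (4*b₁ - 8*r*X₁ + 4*γ*X₁^2 + 2*(1-γ)) * hc
  constructor
  · rintro ⟨-, h⟩
    rw [h, mul_zero] at key
    exact sub_eq_zero.1 ((mul_eq_zero.1 key.symm).resolve_left hX₁.ne')
  · intro h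
    rw [h, sub_self, mul_zero] at key
    refine ⟨?_, (mul_eq_zero.1 key).resolve_left (mul_ne_zero two_ne_zero hγ)⟩
    linear_combination (1 - 2*X₁*X₂) * hc

/- STATEMENT 9: case γ₂ = 1 − γ₁ with the fiber-Einstein constraint (1−γ₁)X₂ = γ₁X₁:
a positive solution exists iff D ≥ 0, and in that case the positive solutions are
exactly X₁ = (2r ± √D)/(2γ₁), X₂ = γ₁X₁/(1−γ₁), both values of X₁ being positive. -/
theorem einstein_system_fiber_einstein_case
    (γ₁ b₁ b₂ r : ℝ) (hγ0 : 0 < γ₁) (hγ1 : γ₁ < 1)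
    (hb₁ : 0 ≤ b₁) (hb₂ : 0 ≤ b₂) (hr : 0 < r)
    (D : ℝ) (hD : D = 4*r^2 - 4*b₁*γ₁ - 4*b₂*(1-γ₁) - 2*γ₁*(1-γ₁)) :
    ((∃ X₁ X₂ : ℝ, 0 < X₁ ∧ 0 < X₂ ∧
        EinsteinSystem γ₁ (1-γ₁) b₁ b₂ r X₁ X₂ ∧ (1-γ₁)*X₂ = γ₁*X₁) ↔ 0 ≤ D) ∧
    (0 ≤ D →
      (∀ X₁ X₂ : ℝ,
        (0 < X₁ ∧ 0 < X₂ ∧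
          EinsteinSystem γ₁ (1-γ₁) b₁ b₂ r X₁ X₂ ∧ (1-γ₁)*X₂ = γ₁*X₁) ↔
        ((X₁ = (2*r + Real.sqrt D)/(2*γ₁) ∨ X₁ = (2*r - Real.sqrt D)/(2*γ₁)) ∧
          X₂ = γ₁*X₁/(1-γ₁))) ∧
      0 < (2*r + Real.sqrt D)/(2*γ₁) ∧ 0 < (2*r - Real.sqrt D)/(2*γ₁)) := by
  subst hD
  set D : ℝ := 4*r^2 - 4*b₁*γ₁ - 4*b₂*(1-γ₁) - 2*γ₁*(1-γ₁) with hD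
  have hγ : 0 < 1 - γ₁ := sub_pos.2 hγ1
  have hlt : √D < 2 * r := by
    rw [Real.sqrt_lt' (by positivity), hD]
    nlinarith [mul_nonneg hb₁ hγ0.le, mul_nonneg hb₂ hγ.le, mul_pos hγ0 hγ]
  have hplus : 0 < (2*r + √D)/(2*γ₁) := by positivity
  have hminus : 0 < (2*r - √D)/(2*γ₁) := div_pos (sub_pos.2 hlt) (by positivity)
  have hsol (hD0 : 0 ≤ D) (X₁ X₂ : ℝ) :
      (0 < X₁ ∧ 0 < X₂ ∧
        EinsteinSystem γ₁ (1-γ₁) b₁ b₂ r X₁ X₂ ∧ (1-γ₁)*X₂ = γ₁*X₁) ↔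
      ((X₁ = (2*r + √D)/(2*γ₁) ∨ X₁ = (2*r - √D)/(2*γ₁)) ∧ X₂ = γ₁*X₁/(1-γ₁)) := by
    have hroots : (2 * γ₁ * X₁ - 2 * r) ^ 2 = D ↔
        X₁ = (2*r + √D)/(2*γ₁) ∨ X₁ = (2*r - √D)/(2*γ₁) := by
      have h2γ : 2 * γ₁ ≠ 0 := by positivity
      rw [← Real.sq_sqrt hD0, sq_eq_sq_iff_eq_or_eq_neg, Real.sq_sqrt hD0,
        eq_div_iff h2γ, eq_div_iff h2γ]
      refine or_congr ⟨fun h => ?_, fun h => ?_⟩ ⟨fun h => ?_, fun h => ?_⟩ <;>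
        linear_combination h
    have hconstraint : (1-γ₁)*X₂ = γ₁*X₁ ↔ X₂ = γ₁*X₁/(1-γ₁) := by
      rw [eq_div_iff hγ.ne', mul_comm]
    constructor
    · rintro ⟨hX₁, -, hE, hc⟩
      exact ⟨hroots.1 ((einsteinSystem_iff_sq_eq hγ1 hX₁ hc).1 hE), hconstraint.1 hc⟩
    · rintro ⟨hX, hX₂⟩
      have hX₁ : 0 < X₁ := by
        rcases hX with rfl | rfl
        exacts [hplus, hminus]
      have hc := hconstraint.2 hX₂
      exact ⟨hX₁, hX₂ ▸ by positivity,
        (einsteinSystem_iff_sq_eq hγ1 hX₁ hc).2 (hroots.2 hX), hc⟩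
  refine ⟨⟨?_, fun hD0 => ⟨_, _, (hsol hD0 _ _).2 ⟨Or.inl rfl, rfl⟩⟩⟩,
    fun hD0 => ⟨hsol hD0, hplus, hminus⟩⟩
  rintro ⟨X₁, X₂, hX₁, -, hE, hc⟩
  exact (sq_nonneg _).trans_eq ((einsteinSystem_iff_sq_eq hγ1 hX₁ hc).1 hE)
end

section
/- Let 0 < γ₁ < 1, set γ₂ = γ₁, and let b₁, b₂ ≥ 0 and r > 0. Then a pair (X₁, X₂) of positive reals satisfies the Einstein system if and only if either (a) X₁ = X₂ and 2γ₁X₁² − 4rX₁ + (2(b₁ + b₂) + 1 − γ₁) = 0, or (b) 2γ₁X₁X₂ = 1 − γ₁ and 2γ₁(2b₂ + 1 − γ₁)X₁² − 4r(1−γ₁)X₁ + (1−γ₁)(2b₁ + 1 − γ₁) = 0. In case (b), setting D = 4r²(1−γ₁) − 2γ₁(2b₂+1−γ₁)(2b₁+1−γ₁), a solution exists only if D ≥ 0, and then X₁ = (2r(1−γ₁) ± √((1−γ₁)D))/(2γ₁(2b₂+1−γ₁)) and X₂ = (1−γ₁)/(2γ₁X₁). (This is the algebraic content of the corollary classifying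 all Einstein adapted metrics in the case γ₂ = γ₁: case (a) corresponds to binormal metrics, case (b) to metrics whose restriction to the fiber is not Einstein.) -/
/-- For equal Casimir eigenvalues, a solution with `2γX₁X₂ = 1 - γ` is one for which `X₁` is a root
of an explicit quadratic. -/
theorem einsteinSystem_iff_quadratic {γ b₁ b₂ r X₁ X₂ : ℝ} (hγ : γ ≠ 0) (hX₁ : X₁ ≠ 0)
    (h : 2*γ*X₁*X₂ = 1 - γ) :
    EinsteinSystem γ γ b₁ b₂ r X₁ X₂ ↔
      2*γ*(2*b₂+1-γ)*X₁^2 - 4*r*(1-γ)*X₁ + (1-γ)*(2*b₁+1-γ) = 0 := by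
  have hne : 2*γ*X₁ ≠ 0 := by positivity
  have key : 2*γ*X₁*(2*b₁*X₂ + 2*b₂*X₁ - 4*r*X₁*X₂ + 2*γ*X₁^2*X₂ + (1-γ)*X₂) =
      2*γ*(2*b₂+1-γ)*X₁^2 - 4*r*(1-γ)*X₁ + (1-γ)*(2*b₁+1-γ) := by
    linear_combination (2*b₁ - 4*r*X₁ + 2*γ*X₁^2 + 1 - γ) * h
  rw [← key, mul_eq_zero, or_iff_right hne]
  exact ⟨And.right, fun h₂ => ⟨by linear_combination (X₁ - X₂) * h, h₂⟩⟩

/-- For equal Casimir eigenvalues, a solution with `X₁ = X₂` is a root of an explicit quadratic. -/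
theorem einsteinSystem_self_iff {γ b₁ b₂ r X : ℝ} (hX : X ≠ 0) :
    EinsteinSystem γ γ b₁ b₂ r X X ↔ 2*γ*X^2 - 4*r*X + (2*(b₁+b₂) + 1 - γ) = 0 := by
  have key : 2*b₁*X + 2*b₂*X - 4*r*X*X + 2*γ*X^2*X + (1-γ)*X =
      X*(2*γ*X^2 - 4*r*X + (2*(b₁+b₂) + 1 - γ)) := by ring
  rw [EinsteinSystem, key, mul_eq_zero, or_iff_right hX]
  exact ⟨And.right, fun h => ⟨by ring, h⟩⟩

/-- The first Einstein equation factors when the Casimir eigenvalues agree. -/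
theorem EinsteinSystem.eq_or_mul_eq {γ b₁ b₂ r X₁ X₂ : ℝ}
    (h : EinsteinSystem γ γ b₁ b₂ r X₁ X₂) : X₁ = X₂ ∨ 2*γ*X₁*X₂ = 1 - γ := by
  have hmul : (X₁ - X₂) * (2*γ*X₁*X₂ - (1 - γ)) = 0 := by linear_combination h.1
  simpa only [mul_eq_zero, sub_eq_zero] using hmul

/- STATEMENT 10: case γ₂ = γ₁. A positive pair solves the Einstein system iff
(a) X₁ = X₂ and 2γ₁X₁² − 4rX₁ + (2(b₁+b₂)+1−γ₁) = 0, or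
(b) 2γ₁X₁X₂ = 1 − γ₁ and 2γ₁(2b₂+1−γ₁)X₁² − 4r(1−γ₁)X₁ + (1−γ₁)(2b₁+1−γ₁) = 0.
In case (b), with D = 4r²(1−γ₁) − 2γ₁(2b₂+1−γ₁)(2b₁+1−γ₁), a solution forces D ≥ 0,
X₁ = (2r(1−γ₁) ± √((1−γ₁)D))/(2γ₁(2b₂+1−γ₁)) and X₂ = (1−γ₁)/(2γ₁X₁). -/
theorem einstein_system_equal_gamma_case
    (γ₁ b₁ b₂ r : ℝ) (hγ0 : 0 < γ₁) (hγ1 : γ₁ < 1)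
    (hb₁ : 0 ≤ b₁) (hb₂ : 0 ≤ b₂) (hr : 0 < r)
    (D : ℝ) (hD : D = 4*r^2*(1-γ₁) - 2*γ₁*(2*b₂+1-γ₁)*(2*b₁+1-γ₁)) :
    (∀ X₁ X₂ : ℝ, 0 < X₁ → 0 < X₂ →
      (EinsteinSystem γ₁ γ₁ b₁ b₂ r X₁ X₂ ↔
        ((X₁ = X₂ ∧ 2*γ₁*X₁^2 - 4*r*X₁ + (2*(b₁+b₂) + 1 - γ₁) = 0) ∨
         (2*γ₁*X₁*X₂ = 1 - γ₁ ∧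
           2*γ₁*(2*b₂+1-γ₁)*X₁^2 - 4*r*(1-γ₁)*X₁ + (1-γ₁)*(2*b₁+1-γ₁) = 0)))) ∧
    (∀ X₁ X₂ : ℝ, 0 < X₁ → 0 < X₂ →
      EinsteinSystem γ₁ γ₁ b₁ b₂ r X₁ X₂ → 2*γ₁*X₁*X₂ = 1 - γ₁ →
      0 ≤ D ∧
      (X₁ = (2*r*(1-γ₁) + Real.sqrt ((1-γ₁)*D))/(2*γ₁*(2*b₂+1-γ₁)) ∨
       X₁ = (2*r*(1-γ₁) - Real.sqrt ((1-γ₁)*D))/(2*γ₁*(2*b₂+1-γ₁))) ∧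
      X₂ = (1-γ₁)/(2*γ₁*X₁)) := by
  refine ⟨fun X₁ X₂ hX₁ hX₂ => ⟨fun h => ?_, ?_⟩, fun X₁ X₂ hX₁ hX₂ h hm => ?_⟩
  · rcases h.eq_or_mul_eq with rfl | hm
    · exact Or.inl ⟨rfl, (einsteinSystem_self_iff hX₁.ne').1 h⟩
    · exact Or.inr ⟨hm, (einsteinSystem_iff_quadratic hγ0.ne' hX₁.ne' hm).1 h⟩
  · rintro (⟨rfl, hq⟩ | ⟨hm, hq⟩)
    · exact (einsteinSystem_self_iff hX₁.ne').2 hq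
    · exact (einsteinSystem_iff_quadratic hγ0.ne' hX₁.ne' hm).2 hq
  · have hq := (einsteinSystem_iff_quadratic hγ0.ne' hX₁.ne' hm).1 h
    have hγ : 0 < 1 - γ₁ := sub_pos.2 hγ1
    have hb : 0 < 2*b₂+1-γ₁ := by linarith
    have hA : 0 < 2*γ₁*(2*b₂+1-γ₁) := by positivity
    have hsq : (1-γ₁)*D = (X₁*(2*γ₁*(2*b₂+1-γ₁)) - 2*r*(1-γ₁))^2 := by
      rw [hD]
      linear_combination -(2*γ₁*(2*b₂+1-γ₁)) * hq
    refine ⟨nonneg_of_mul_nonneg_right (hsq ▸ sq_nonneg _) hγ, ?_, ?_⟩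
    · rw [hsq, Real.sqrt_sq_eq_abs, eq_div_iff hA.ne', eq_div_iff hA.ne']
      rcases abs_choice (X₁*(2*γ₁*(2*b₂+1-γ₁)) - 2*r*(1-γ₁)) with habs | habs
      · left; rw [habs]; ring
      · right; rw [habs]; ring
    · rw [eq_div_iff (by positivity)]
      linear_combination hm
end

section
/- Let 0 < γ₁ < 1, set γ₂ = 1 − γ₁, and let b₁, b₂ ≥ 0 and r > 0. Then a pair (X₁, X₂) of positive reals satisfies equation (E1) if and only if (1−γ₁)X₂ = γ₁X₁ or 2X₁X₂ = 1. Consequently, (X₁, X₂) positive satisfies the full Einstein system if and only if either (a) (1−γ₁)X₂ = γ₁X₁ and 2γ₁X₁² − 4rX₁ + (2b₁ + 2b₂(1−γ₁)/γ₁ + 1 − γ₁) = 0, or (b) 2X₁X₂ = 1 and 2(2b₂ + γ₁)X₁² − 4rX₁ + (2b₁ + 1 − γ₁) = 0; in case (b), setting D = 4r² − 2(2b₂+γ₁)(2b₁+1−γ₁), a solution exists only if D ≥ 0 and then X₁ = (2r ± √D)/(2(2b₂+γ₁)) and X₂ = 1/(2X₁). (This is the algebraic content of the corollary classifying all Einstein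 adapted metrics in the case γ₂ = 1 − γ₁; in case (b) the restriction to the fiber is not Einstein and the metric is never binormal.) -/
/-- For `γ₂ = 1 - γ₁` the left-hand side of (E1) factors. -/
lemma einstein_first_equation_iff (γ x y : ℝ) :
    2*γ*x^2*y + (1-γ)*y - 2*(1-γ)*x*y^2 - (1-(1-γ))*x = 0 ↔
      ((1-γ)*y = γ*x ∨ 2*x*y = 1) := by
  have factored : 2*γ*x^2*y + (1-γ)*y - 2*(1-γ)*x*y^2 - (1-(1-γ))*x =
      ((1-γ)*y - γ*x) * (1 - 2*x*y) := by ring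
  rw [factored, mul_eq_zero, sub_eq_zero, sub_eq_zero, eq_comm (a := (1 : ℝ))]

/-- On the line `(1-γ)y = γx`, (E2) is a quadratic equation in `x`. -/
lemma einstein_second_equation_iff_of_line {γ b₁ b₂ r x y : ℝ} (hγ : γ ≠ 0) (hy : y ≠ 0)
    (h : (1-γ)*y = γ*x) :
    2*b₁*y + 2*b₂*x - 4*r*x*y + 2*γ*x^2*y + (1-γ)*y = 0 ↔
      2*γ*x^2 - 4*r*x + (2*b₁ + 2*b₂*(1-γ)/γ + 1 - γ) = 0 := by
  have factored : 2*b₁*y + 2*b₂*x - 4*r*x*y + 2*γ*x^2*y + (1-γ)*y =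
      y * (2*γ*x^2 - 4*r*x + (2*b₁ + 2*b₂*(1-γ)/γ + 1 - γ)) := by
    field_simp
    linear_combination -2*b₂*h
  rw [factored, mul_eq_zero, or_iff_right hy]

/-- On the hyperbola `2xy = 1`, (E2) is a quadratic equation in `x`. -/
lemma einstein_second_equation_iff_of_hyperbola {γ b₁ b₂ r x y : ℝ} (h : 2*x*y = 1) :
    2*b₁*y + 2*b₂*x - 4*r*x*y + 2*γ*x^2*y + (1-γ)*y = 0 ↔
      2*(2*b₂+γ)*x^2 - 4*r*x + (2*b₁+1-γ) = 0 := by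
  have hy : y ≠ 0 := by
    rintro rfl
    simp at h
  have factored : 2*b₁*y + 2*b₂*x - 4*r*x*y + 2*γ*x^2*y + (1-γ)*y =
      y * (2*(2*b₂+γ)*x^2 - 4*r*x + (2*b₁+1-γ)) := by
    linear_combination -2*b₂*x*h
  rw [factored, mul_eq_zero, or_iff_right hy]

/-- The quadratic formula for `2ax² - 4rx + c = 0`. -/
lemma nonneg_and_eq_of_quadratic {a r c x : ℝ} (ha : a ≠ 0) (h : 2*a*x^2 - 4*r*x + c = 0) :
    0 ≤ 4*r^2 - 2*a*c ∧
      (x = (2*r + √(4*r^2 - 2*a*c))/(2*a) ∨ x = (2*r - √(4*r^2 - 2*a*c))/(2*a)) := by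
  have square : 4*r^2 - 2*a*c = (2*a*x - 2*r)^2 := by linear_combination -2*a*h
  refine ⟨square ▸ sq_nonneg _, ?_⟩
  rw [square, Real.sqrt_sq_eq_abs, eq_div_iff (by positivity), eq_div_iff (by positivity)]
  rcases abs_choice (2*a*x - 2*r) with habs | habs <;> rw [habs]
  · left; ring
  · right; ring

/- STATEMENT 11: case γ₂ = 1 − γ₁. A positive pair satisfies (E1) iff
(1−γ₁)X₂ = γ₁X₁ or 2X₁X₂ = 1; it satisfies the full system iff
(a) (1−γ₁)X₂ = γ₁X₁ and 2γ₁X₁² − 4rX₁ + (2b₁ + 2b₂(1−γ₁)/γ₁ + 1 − γ₁) = 0, or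
(b) 2X₁X₂ = 1 and 2(2b₂+γ₁)X₁² − 4rX₁ + (2b₁+1−γ₁) = 0;
in case (b), with D = 4r² − 2(2b₂+γ₁)(2b₁+1−γ₁), a solution forces D ≥ 0,
X₁ = (2r ± √D)/(2(2b₂+γ₁)) and X₂ = 1/(2X₁). -/
theorem einstein_system_complementary_gamma_case
    (γ₁ b₁ b₂ r : ℝ) (hγ0 : 0 < γ₁) (hγ1 : γ₁ < 1)
    (hb₁ : 0 ≤ b₁) (hb₂ : 0 ≤ b₂) (hr : 0 < r)
    (D : ℝ) (hD : D = 4*r^2 - 2*(2*b₂+γ₁)*(2*b₁+1-γ₁)) :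
    (∀ X₁ X₂ : ℝ, 0 < X₁ → 0 < X₂ →
      (2*γ₁*X₁^2*X₂ + (1-γ₁)*X₂ - 2*(1-γ₁)*X₁*X₂^2 - (1-(1-γ₁))*X₁ = 0 ↔
        ((1-γ₁)*X₂ = γ₁*X₁ ∨ 2*X₁*X₂ = 1))) ∧
    (∀ X₁ X₂ : ℝ, 0 < X₁ → 0 < X₂ →
      (EinsteinSystem γ₁ (1-γ₁) b₁ b₂ r X₁ X₂ ↔
        (((1-γ₁)*X₂ = γ₁*X₁ ∧
            2*γ₁*X₁^2 - 4*r*X₁ + (2*b₁ + 2*b₂*(1-γ₁)/γ₁ + 1 - γ₁) = 0) ∨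
         (2*X₁*X₂ = 1 ∧ 2*(2*b₂+γ₁)*X₁^2 - 4*r*X₁ + (2*b₁+1-γ₁) = 0)))) ∧
    (∀ X₁ X₂ : ℝ, 0 < X₁ → 0 < X₂ →
      EinsteinSystem γ₁ (1-γ₁) b₁ b₂ r X₁ X₂ → 2*X₁*X₂ = 1 →
      0 ≤ D ∧
      (X₁ = (2*r + Real.sqrt D)/(2*(2*b₂+γ₁)) ∨
       X₁ = (2*r - Real.sqrt D)/(2*(2*b₂+γ₁))) ∧
      X₂ = 1/(2*X₁)) := by
  subst hD
  refine ⟨fun X₁ X₂ _ _ => einstein_first_equation_iff γ₁ X₁ X₂, fun X₁ X₂ _ hX₂ => ?_,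
    fun X₁ X₂ hX₁ _ hE h => ?_⟩
  · rw [EinsteinSystem, einstein_first_equation_iff, or_and_right]
    exact or_congr
      (and_congr_right fun h => einstein_second_equation_iff_of_line hγ0.ne' hX₂.ne' h)
      (and_congr_right fun h => einstein_second_equation_iff_of_hyperbola h)
  · have ha : 2*b₂+γ₁ ≠ 0 := by positivity
    have quadratic := (einstein_second_equation_iff_of_hyperbola h).1 hE.2
    obtain ⟨hnonneg, hroots⟩ := nonneg_and_eq_of_quadratic ha quadratic
    refine ⟨hnonneg, hroots, ?_⟩
    rw [eq_div_iff (by positivity)]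
    linear_combination h
end

section
/- Let 0 < γ₁ < 1 and set γ₂ = 1 − γ₁, b₁ = γ₁/4, b₂ = (1−γ₁)/4, r = 1/2. Then the pair (X₁, X₂) = (1/(2γ₁), 1/(2(1−γ₁))) is the unique pair of positive reals satisfying the Einstein system together with the constraint (1−γ₁)X₂ = γ₁X₁. (This is the algebraic content of the theorem producing, for γ₁ = l/(l+s), the Einstein adapted metric g = (2l/(l+s))B_{𝔭₁} ⊕ (2s/(l+s))B_{𝔭₂} ⊕ B_𝔫, i.e. (X₁,X₂) = ((l+s)/(2l), (l+s)/(2s)), on the bisymmetric fibration corresponding to the triple (𝔰𝔲_{2(l+s)}, 𝔰𝔲_{2l} ⊕ 𝔰𝔲_{2s} ⊕ ℝ, 𝔰𝔲_l ⊕ 𝔰𝔲_l ⊕ 𝔰𝔲_s ⊕ 𝔰𝔲_s ⊕ ℝ³); here the discriminant D = 4r² − 4b₁γ₁ − 4b₂(1−γ₁) − 2γ₁(1−γ₁) vanishes identically.) -/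
/- STATEMENT 12: for 0 < γ₁ < 1, γ₂ = 1 − γ₁, b₁ = γ₁/4, b₂ = (1−γ₁)/4, r = 1/2,
the pair (X₁, X₂) = (1/(2γ₁), 1/(2(1−γ₁))) is the unique positive solution of the
Einstein system subject to the constraint (1−γ₁)X₂ = γ₁X₁. -/
theorem einstein_system_su_unique_solution
    (γ₁ : ℝ) (hγ0 : 0 < γ₁) (hγ1 : γ₁ < 1) :
    ∀ X₁ X₂ : ℝ,
      (0 < X₁ ∧ 0 < X₂ ∧
        EinsteinSystem γ₁ (1-γ₁) (γ₁/4) ((1-γ₁)/4) (1/2) X₁ X₂ ∧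
        (1-γ₁)*X₂ = γ₁*X₁)
      ↔ (X₁ = 1/(2*γ₁) ∧ X₂ = 1/(2*(1-γ₁))) := by
  intro X₁ X₂
  have hδ : 0 < 1 - γ₁ := sub_pos.mpr hγ1
  unfold EinsteinSystem
  constructor
  · rintro ⟨hX₁, -, ⟨-, hE⟩, hc⟩
    -- Substituting the constraint turns the second equation into a perfect square.
    have hsq : X₁ * (1 - 2*γ₁*X₁)^2 = 0 := by
      linear_combination 2*(1-γ₁)*hE - (γ₁ - 4*X₁ + 4*γ₁*X₁^2 + 2*(1-γ₁))*hc
    have h₁ : 1 - 2*γ₁*X₁ = 0 :=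
      pow_eq_zero_iff two_ne_zero |>.mp ((mul_eq_zero.mp hsq).resolve_left hX₁.ne')
    constructor
    · rw [eq_div_iff (by positivity)]
      linear_combination -h₁
    · rw [eq_div_iff (by positivity)]
      linear_combination 2*hc - h₁
  · rintro ⟨rfl, rfl⟩
    refine ⟨by positivity, by positivity, ⟨?_, ?_⟩, ?_⟩ <;> field_simp <;> ring
end
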